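/- arXiv:2508.18461 — 2 statements merged into one kernel-verified Lean document; each statement's English description precedes it below -/
import Mathlib

section
/- Let C be a strong divisibility sequence and let p be an ideal prime for C with parameter s = s(p), so that in particular α(p^j) = α(p) for 1 ≤ j ≤ s. Then for every 0 ≤ r < α(p), the entries of the acceptable-prime initial vector specialize as u_{p,C,0}(r) = r + 1 and u_{p,C,1}(r) = (α(p) − r − 1)·x^{s−1}; here for λ ∈ {0,1}, u_{p,C,λ}(r) = Σ x^{f_{p,C,λ}(r,r_1,r_2) − λ}, the sum over pairs (r_1, r_2) ∈ {0,1,…,α(p^s)−1}^2 with r_1 + r_2 = r + λ·α(p^s). -/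
open Finset

/-- A strong divisibility sequence: nonzero integers `Cs 1, Cs 2, ...` with
`gcd (Cs n) (Cs m) = |Cs (gcd n m)|`. -/
def IsStrongDivSeq (Cs : ℕ → ℤ) : Prop :=
  (∀ n, 1 ≤ n → Cs n ≠ 0) ∧
  ∀ m n, 1 ≤ m → 1 ≤ n → Int.gcd (Cs n) (Cs m) = (Cs (Nat.gcd n m)).natAbs

/-- `a` is the rank of apparition of `m` in the sequence `Cs`:
the least index `j ≥ 1` such that `m ∣ Cs j`. -/
def IsRank (Cs : ℕ → ℤ) (m a : ℕ) : Prop :=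
  1 ≤ a ∧ (m : ℤ) ∣ Cs a ∧ ∀ j, 1 ≤ j → (m : ℤ) ∣ Cs j → a ≤ j

/-- `p` is an ideal prime for `Cs`, with `α k` the rank of apparition of `p ^ k`
and parameter `s = s(p)`. -/
def IdealPrime (Cs : ℕ → ℤ) (p : ℕ) (α : ℕ → ℕ) (s : ℕ) : Prop :=
  1 ≤ s ∧ (∀ k, 1 ≤ k → IsRank Cs (p ^ k) (α k)) ∧
  (∀ k, 1 ≤ k → k ≤ s → α k = α 1) ∧
  (∀ k, s < k → α k = p ^ (k - s) * α 1)

/-- `f_{p,C,λ}(r, r₁, r₂)` from the acceptable-prime initial vector. -/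
def fCnom (α : ℕ → ℕ) (s lam r r1 r2 : ℕ) : ℤ :=
  (lam : ℤ) * ∑ j ∈ Finset.Icc 1 s, ((α s / α j : ℕ) : ℤ)
  + ∑ j ∈ Finset.Icc 1 s,
      (((r / α j : ℕ) : ℤ) - ((r1 / α j : ℕ) : ℤ) - ((r2 / α j : ℕ) : ℤ))

/-- `u_{p,C,λ}(r) = ∑ x ^ (f_{p,C,λ}(r,r₁,r₂) - λ)`, summed over pairs
`(r₁, r₂) ∈ {0, …, α(p^s) - 1}²` with `r₁ + r₂ = r + λ · α(p^s)`. -/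
noncomputable def uCnom (α : ℕ → ℕ) (s lam r : ℕ) : Polynomial ℤ :=
  ∑ q ∈ (Finset.range (α s) ×ˢ Finset.range (α s)).filter
      (fun q => q.1 + q.2 = r + lam * α s),
    Polynomial.X ^ (fCnom α s lam r q.1 q.2 - lam).toNat

/-!
When the ranks `α(p), …, α(p^s)` all equal `a`, every floor in `f` is taken of a number below `a`
and vanishes, so `f = λ s` is constant and `u` is a single monomial times the number of pairs
`(r₁, r₂)` in the sum. Counting points of a square on an antidiagonal gives `r + 1` for `λ = 0` and
`a - r - 1` for `λ = 1`.
-/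

theorem card_filter_range_product_range_add_eq (a b n : ℕ) :
    #{q ∈ range a ×ˢ range b | q.1 + q.2 = n} = min a (n + 1) - (n + 1 - b) := by
  -- On the line `q.1 + q.2 = n`, the first coordinate runs over `[n + 1 - b, min a (n + 1))`.
  rw [← Nat.card_Ico]
  refine card_bij' (fun q _ ↦ q.1) (fun x _ ↦ (x, n - x)) ?_ ?_ ?_ ?_ <;>
    simp only [mem_filter, mem_product, mem_range, mem_Ico, Prod.forall, Prod.mk.injEq] <;>
    lia

section ConstantRank

variable {α : ℕ → ℕ} {s a r : ℕ}

theorem fCnom_eq_mul_of_forall_eq (hα : ∀ k, 1 ≤ k → k ≤ s → α k = a) (lam : ℕ) {r₁ r₂ : ℕ}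
    (hr : r < a) (hr₁ : r₁ < a) (hr₂ : r₂ < a) :
    fCnom α s lam r r₁ r₂ = lam * s := by
  have quotient_eq_one : ∀ j ∈ Icc 1 s, ((α s / α j : ℕ) : ℤ) = 1 := fun j hj ↦ by
    obtain ⟨hj₁, hjs⟩ := mem_Icc.mp hj
    rw [hα s (hj₁.trans hjs) le_rfl, hα j hj₁ hjs, Nat.div_self (by lia), Nat.cast_one]
  have floors_eq_zero : ∀ j ∈ Icc 1 s,
      ((r / α j : ℕ) : ℤ) - ((r₁ / α j : ℕ) : ℤ) - ((r₂ / α j : ℕ) : ℤ) = 0 := fun j hj ↦ by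
    obtain ⟨hj₁, hjs⟩ := mem_Icc.mp hj
    simp [hα j hj₁ hjs, Nat.div_eq_of_lt, hr, hr₁, hr₂]
  rw [fCnom, sum_congr rfl quotient_eq_one, sum_eq_zero floors_eq_zero]
  simp

theorem uCnom_eq_card_nsmul_of_forall_eq (hs : 1 ≤ s) (hα : ∀ k, 1 ≤ k → k ≤ s → α k = a)
    (lam : ℕ) (hr : r < a) :
    uCnom α s lam r =
      #{q ∈ range a ×ˢ range a | q.1 + q.2 = r + lam * a} • Polynomial.X ^ (lam * (s - 1)) := by
  rw [uCnom, hα s hs le_rfl]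
  refine sum_eq_card_nsmul fun q hq ↦ ?_
  obtain ⟨⟨hq₁, hq₂⟩, -⟩ : (q.1 < a ∧ q.2 < a) ∧ _ := by
    simpa only [mem_filter, mem_product, mem_range] using hq
  have exponent_eq : ((lam : ℤ) * s - lam).toNat = lam * (s - 1) := by
    rw [← Int.toNat_natCast (lam * (s - 1)), Nat.cast_mul, Nat.cast_pred hs, mul_sub_one]
  rw [fCnom_eq_mul_of_forall_eq hα lam hr hq₁ hq₂, exponent_eq]

theorem stmt16_general (hs : 1 ≤ s) (hα : ∀ k, 1 ≤ k → k ≤ s → α k = a) (hr : r < a) :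
    uCnom α s 0 r = Polynomial.C ((r : ℤ) + 1) ∧
    uCnom α s 1 r = Polynomial.C ((a : ℤ) - r - 1) * Polynomial.X ^ (s - 1) := by
  have card_zero : #{q ∈ range a ×ˢ range a | q.1 + q.2 = r + 0 * a} = r + 1 := by
    rw [card_filter_range_product_range_add_eq]
    lia
  have card_one : (#{q ∈ range a ×ˢ range a | q.1 + q.2 = r + 1 * a} : ℤ) = a - r - 1 := by
    rw [card_filter_range_product_range_add_eq]
    lia
  constructor
  · rw [uCnom_eq_card_nsmul_of_forall_eq hs hα 0 hr, card_zero]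
    simp
  · rw [uCnom_eq_card_nsmul_of_forall_eq hs hα 1 hr, ← card_one, one_mul (s - 1)]
    simp

end ConstantRank

theorem stmt16 (Cs : ℕ → ℤ) (p : ℕ) (hp : p.Prime) (α : ℕ → ℕ) (s : ℕ)
    (hC : IsStrongDivSeq Cs) (hid : IdealPrime Cs p α s)
    (r : ℕ) (hr : r < α 1) :
    uCnom α s 0 r = Polynomial.C ((r : ℤ) + 1) ∧
    uCnom α s 1 r =
      Polynomial.C ((α 1 : ℤ) - r - 1) * Polynomial.X ^ (s - 1) := by
  obtain ⟨hs, -, hα, -⟩ := hid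
  exact stmt16_general hs hα hr
end

section
/- Let C be a strong divisibility sequence, let p be an ideal prime for C, and fix 0 ≤ r < α(p). Then the sequence (a_n)_{n≥0} defined by a_n = T_{p,C}(α(p)·n + r, x), viewed as a sequence with entries in the field ℚ(x) of rational functions, is p-regular: the ℚ(x)-vector subspace of the space of all sequences ℕ → ℚ(x) spanned by the set of subsequences { (a_{p^e·n + i})_{n≥0} : e ≥ 0, 0 ≤ i ≤ p^e − 1 } is finite-dimensional. -/
open Finset

/-- The `C`-orial: `0!_C = 1`, `n!_C = Cs 1 * Cs 2 * ⋯ * Cs n`. -/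
def Corial (Cs : ℕ → ℤ) : ℕ → ℤ
  | 0 => 1
  | n + 1 => Corial Cs n * Cs (n + 1)

/-- The `p`-adic valuation of the `C`-nomial coefficient `binom(n, m)_C`,
defined as `ν_p(n!_C) - ν_p(m!_C) - ν_p((n-m)!_C)` (an integer). -/
def nuCnomial (p : ℕ) (Cs : ℕ → ℤ) (n m : ℕ) : ℤ :=
  (padicValInt p (Corial Cs n) : ℤ) - (padicValInt p (Corial Cs m) : ℤ)
    - (padicValInt p (Corial Cs (n - m)) : ℤ)

/-- `T_{p,C}(n, x) = ∑_{m=0}^{n} x ^ ν_p(binom(n,m)_C)`, a polynomial in `ℤ[x]`. -/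
noncomputable def Tpoly (p : ℕ) (Cs : ℕ → ℤ) (n : ℕ) : Polynomial ℤ :=
  ∑ m ∈ Finset.range (n + 1), Polynomial.X ^ (nuCnomial p Cs n m).toNat

/-!
Write `a = α(p)`. Ideality of `p` gives `ν_p(n!_C) = s * (n / a) + ν_p((n / a)!)`, which has the
same shape as Legendre's recursion `ν_p(n!) = n / p + ν_p((n / p)!)`. Let
`F N = ∑ x ^ ν_p(N! / (i! j!))` over `i + j = N`, and let `G N` be the same sum over
`i + j = N - 1`. Grouping the summation index of `T_{p,C}(a N + r, x)` by its quotient `i` on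
division by `a`, the complementary index has quotient `N - i` for `r + 1` of the residues and
`N - 1 - i` for the other `a - r - 1`, so that
`T_{p,C}(a N + r, x) = (r + 1) F N + (a - r - 1) x ^ s G N`. The same computation with `p`
in place of `a` expresses `F (p N + j)` and `G (p N + j)` through `F N` and `G N`. Hence the span
of `F` and `G` is stable under `f ↦ (n ↦ f (p n + j))` for `j < p`, and it contains every
subsequence in question.
-/

open Polynomial
open scoped Nat

section RankOfApparition

variable {Cs : ℕ → ℤ}

theorem IsRank.dvd_iff {m a n : ℕ} (h : IsRank Cs m a) (hC : IsStrongDivSeq Cs) (hn : 1 ≤ n) :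
    (m : ℤ) ∣ Cs n ↔ a ∣ n := by
  obtain ⟨ha, hma, hmin⟩ := h
  have hgcd : (Int.gcd (Cs n) (Cs a) : ℤ) = (Cs (Nat.gcd n a)).natAbs :=
    congrArg _ (hC.2 a n ha hn)
  constructor
  · intro hmn
    have hm_gcd : (m : ℤ) ∣ Cs (Nat.gcd n a) :=
      Int.dvd_natAbs.mp (hgcd ▸ Int.dvd_coe_gcd hmn hma)
    have ha_le : a ≤ Nat.gcd n a := hmin _ (Nat.gcd_pos_of_pos_left _ hn) hm_gcd
    exact Nat.gcd_eq_right_iff_dvd.mp (le_antisymm (Nat.gcd_le_right _ ha) ha_le)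
  · intro han
    rw [Nat.gcd_eq_right han] at hgcd
    have hCs : Cs a ∣ Cs n := Int.natAbs_dvd.mp (hgcd ▸ Int.gcd_dvd_left _ _)
    exact hma.trans hCs

theorem IsStrongDivSeq.corial_ne_zero (hC : IsStrongDivSeq Cs) (n : ℕ) : Corial Cs n ≠ 0 := by
  induction n with
  | zero => exact one_ne_zero
  | succ n ih => exact mul_ne_zero ih (hC.1 _ n.succ_pos)

namespace IdealPrime

variable {p s : ℕ} {α : ℕ → ℕ}

theorem rank_one_pos (hid : IdealPrime Cs p α s) : 0 < α 1 :=
  (hid.2.1 1 le_rfl).1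

-- For `k ≤ s` the truncated exponent `k - s` is `0`, so one formula covers both regimes.
theorem rank_eq (hid : IdealPrime Cs p α s) {k : ℕ} (hk : 1 ≤ k) :
    α k = p ^ (k - s) * α 1 := by
  rcases le_or_gt k s with hks | hks
  · rw [hid.2.2.1 k hk hks, Nat.sub_eq_zero_of_le hks, pow_zero, one_mul]
  · exact hid.2.2.2 k hks

variable [Fact p.Prime]

theorem le_padicValInt_iff (hid : IdealPrime Cs p α s) (hC : IsStrongDivSeq Cs) {k n : ℕ}
    (hk : 1 ≤ k) (hn : 1 ≤ n) :
    k ≤ padicValInt p (Cs n) ↔ p ^ (k - s) * α 1 ∣ n := by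
  rw [← hid.rank_eq hk, ← (hid.2.1 k hk).dvd_iff hC hn, Nat.cast_pow, padicValInt_dvd_iff,
    or_iff_right (hC.1 n hn)]

theorem padicValInt_eq_zero (hid : IdealPrime Cs p α s) (hC : IsStrongDivSeq Cs) {n : ℕ}
    (hn : 1 ≤ n) (hdvd : ¬ α 1 ∣ n) : padicValInt p (Cs n) = 0 := by
  by_contra hne
  have hrank := (hid.le_padicValInt_iff hC (Nat.one_le_iff_ne_zero.mpr hne) hn).mp le_rfl
  exact hdvd (dvd_of_mul_left_dvd hrank)

theorem padicValInt_rank_mul (hid : IdealPrime Cs p α s) (hC : IsStrongDivSeq Cs) {q : ℕ}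
    (hq : 1 ≤ q) : padicValInt p (Cs (α 1 * q)) = s + padicValNat p q := by
  refine eq_of_forall_le_iff fun k => ?_
  rcases Nat.eq_zero_or_pos k with rfl | hk
  · simp
  · rw [hid.le_padicValInt_iff hC hk (Nat.mul_pos hid.rank_one_pos hq), mul_comm (α 1),
      Nat.mul_dvd_mul_iff_right hid.rank_one_pos, padicValNat_dvd_iff_le (by omega)]
    omega

theorem padicValInt_corial (hid : IdealPrime Cs p α s) (hC : IsStrongDivSeq Cs) (n : ℕ) :
    padicValInt p (Corial Cs n) = s * (n / α 1) + padicValNat p (n / α 1)! := by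
  induction n with
  | zero => simp [Corial]
  | succ n ih =>
    rw [Corial, padicValInt.mul (hC.corial_ne_zero n) (hC.1 (n + 1) n.succ_pos), ih]
    by_cases hdvd : α 1 ∣ n + 1
    · have hn : n + 1 = α 1 * (n / α 1 + 1) := by
        rw [← Nat.succ_div_of_dvd hdvd, Nat.mul_div_cancel' hdvd]
      rw [Nat.succ_div_of_dvd hdvd, Nat.factorial_succ,
        padicValNat.mul (Nat.succ_ne_zero _) (Nat.factorial_ne_zero _), hn,
        hid.padicValInt_rank_mul hC (Nat.succ_pos _)]
      ring
    · rw [hid.padicValInt_eq_zero hC n.succ_pos hdvd, Nat.succ_div_of_not_dvd hdvd, add_zero]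

end IdealPrime

end RankOfApparition

section FactorialValuation

variable (p : ℕ) [Fact p.Prime]

theorem padicValNat_factorial_add_le (m n : ℕ) :
    padicValNat p m ! + padicValNat p n ! ≤ padicValNat p (m + n)! := by
  rw [← padicValNat.mul m.factorial_ne_zero n.factorial_ne_zero,
    ← padicValNat_dvd_iff_le (Nat.factorial_ne_zero _)]
  exact pow_padicValNat_dvd.trans (Nat.factorial_mul_factorial_dvd_factorial_add m n)

theorem padicValNat_factorial_eq_div_add (n : ℕ) :
    padicValNat p n ! = n / p + padicValNat p (n / p)! := by
  conv_lhs => rw [← Nat.div_add_mod n p]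
  rw [padicValNat_factorial_mul_add _ (Nat.mod_lt _ (Fact.out : p.Prime).pos),
    padicValNat_factorial_mul, add_comm]

end FactorialValuation

section BlockSums

theorem sum_range_mul_eq_sum_blocks {M : Type*} [AddCommMonoid M] (f : ℕ → M) (b N : ℕ) :
    ∑ m ∈ range (b * N), f m = ∑ q ∈ range N, ∑ t ∈ range b, f (b * q + t) := by
  induction N with
  | zero => simp
  | succ N ih => rw [Nat.mul_succ, sum_range_add, ih, sum_range_succ]

theorem mul_add_div_of_lt {b t : ℕ} (ht : t < b) (q : ℕ) : (b * q + t) / b = q := by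
  rw [Nat.mul_add_div (by omega), Nat.div_eq_of_lt ht, add_zero]

variable {b k N q t : ℕ}

theorem reflect_div_of_lt (hk : k ≤ b) (hq : q ≤ N) (ht : t < k) :
    (b * N + k - 1 - (b * q + t)) / b = N - q := by
  obtain ⟨d, rfl⟩ := Nat.exists_eq_add_of_le hq
  have hreflect : b * (q + d) + k - 1 - (b * q + t) = b * d + (k - 1 - t) := by
    rw [mul_add]; omega
  rw [hreflect, mul_add_div_of_lt (by omega), Nat.add_sub_cancel_left]

theorem reflect_div_of_le (hq : q < N) (hkt : k ≤ t) (ht : t < b) :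
    (b * N + k - 1 - (b * q + t)) / b = N - 1 - q := by
  obtain ⟨d, rfl⟩ := Nat.exists_eq_add_of_lt hq
  have hreflect : b * (q + d + 1) + k - 1 - (b * q + t) = b * d + (b + k - 1 - t) := by
    rw [mul_add, mul_add]; omega
  rw [hreflect, mul_add_div_of_lt (by omega)]
  omega

variable {R : Type*} [CommSemiring R]

theorem sum_range_reflect_div_of_le (hk : k ≤ b) (hq : q ≤ N) (ψ : ℕ → ℕ → R) :
    ∑ t ∈ range k, ψ ((b * q + t) / b) ((b * N + k - 1 - (b * q + t)) / b) =
      k * ψ q (N - q) := by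
  rw [sum_congr rfl (g := fun _ => ψ q (N - q)), sum_const, card_range, nsmul_eq_mul]
  intro t ht
  have ht : t < k := mem_range.mp ht
  rw [mul_add_div_of_lt (by omega), reflect_div_of_lt hk hq ht]

theorem sum_range_reflect_div_block (hk : k ≤ b) (hq : q < N) (ψ : ℕ → ℕ → R) :
    ∑ t ∈ range b, ψ ((b * q + t) / b) ((b * N + k - 1 - (b * q + t)) / b) =
      k * ψ q (N - q) + (b - k : ℕ) * ψ q (N - 1 - q) := by
  rw [← sum_range_add_sum_Ico _ hk, sum_range_reflect_div_of_le hk hq.le,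
    sum_congr rfl (s₁ := Ico k b) (g := fun _ => ψ q (N - 1 - q)), sum_const, Nat.card_Ico,
    nsmul_eq_mul]
  intro t ht
  have ⟨hkt, htb⟩ := mem_Ico.mp ht
  rw [mul_add_div_of_lt htb, reflect_div_of_le hq hkt htb]

theorem sum_range_reflect_div (hk : k ≤ b) (N : ℕ) (ψ : ℕ → ℕ → R) :
    ∑ m ∈ range (b * N + k), ψ (m / b) ((b * N + k - 1 - m) / b) =
      k * ∑ q ∈ range (N + 1), ψ q (N - q) + (b - k : ℕ) * ∑ q ∈ range N, ψ q (N - 1 - q) := by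
  rw [sum_range_add, sum_range_mul_eq_sum_blocks,
    sum_congr rfl fun q hq => sum_range_reflect_div_block hk (mem_range.mp hq) ψ,
    sum_range_reflect_div_of_le hk le_rfl, sum_add_distrib, ← mul_sum, ← mul_sum, sum_range_succ]
  ring

end BlockSums

section QuotientSum

/-- The sum of `x ^ (v n - v i - v j)` over the pairs `(i, j)` with `i + j + 1 = k`.
For `v n = ν_p(n!_C)`, the choice `k = n + 1` gives `T_{p,C}(n, x)`; the choice `k = n` gives
the companion sum needed to close the base-`p` recursion. The truncated subtractions are exact
when `v` is superadditive, as it is for `ν_p(n!)`. -/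
def quotientSum {R : Type*} [CommSemiring R] (x : R) (v : ℕ → ℕ) (n k : ℕ) : R :=
  ∑ i ∈ range k, x ^ (v n - v i - v (k - 1 - i))

/-- The module spanned by the sequences `n ↦ quotientSum x u n (n + 1)` and
`n ↦ quotientSum x u n n`. For `u n = ν_p(n!)` it contains all the subsequences in question. -/
def quotientSumSpan {R : Type*} [CommSemiring R] (x : R) (u : ℕ → ℕ) : Submodule R (ℕ → R) :=
  Submodule.span R {fun n => quotientSum x u n (n + 1), fun n => quotientSum x u n n}

variable {R : Type*} [CommSemiring R] {u v : ℕ → ℕ} {b c j k : ℕ}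

theorem quotientSum_mul_add (x : R) (hu : ∀ m n, u m + u n ≤ u (m + n))
    (hv : ∀ n, v n = c * (n / b) + u (n / b)) (hj : j < b) (hk : k ≤ b) (N : ℕ) :
    quotientSum x v (b * N + j) (b * N + k) =
      k * quotientSum x u N (N + 1) + (b - k : ℕ) * x ^ c * quotientSum x u N N := by
  simp only [quotientSum, hv, mul_add_div_of_lt hj]
  rw [sum_range_reflect_div hk N fun i j =>
    x ^ (c * N + u N - (c * i + u i) - (c * j + u j)), mul_assoc, mul_sum (a := x ^ c)]
  congr 2
  · apply sum_congr rfl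
    intro q hq
    obtain ⟨d, rfl⟩ := Nat.exists_eq_add_of_le (mem_range_succ_iff.mp hq)
    rw [Nat.add_sub_cancel, Nat.add_sub_cancel_left, mul_add]
    congr 1
    omega
  · apply sum_congr rfl
    intro q hq
    obtain ⟨d, rfl⟩ := Nat.exists_eq_add_of_lt (mem_range.mp hq)
    have hle : u q + u d ≤ u (q + d + 1) :=
      (hu q d).trans ((Nat.le_add_right _ _).trans (hu (q + d) 1))
    rw [← pow_add, Nat.add_sub_cancel, Nat.add_sub_cancel_left, mul_add, mul_add]
    congr 1
    omega

theorem quotientSum_mul_add_mem_span (x : R) (hu : ∀ m n, u m + u n ≤ u (m + n))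
    (hv : ∀ n, v n = c * (n / b) + u (n / b)) (hj : j < b) (hk : k ≤ b) :
    (fun n => quotientSum x v (b * n + j) (b * n + k)) ∈ quotientSumSpan x u :=
  Submodule.mem_span_pair.mpr ⟨k, (b - k : ℕ) * x ^ c,
    funext fun N => (quotientSum_mul_add x hu hv hj hk N).symm⟩

theorem quotientSumSpan_le_comap_funLeft (x : R) (hu : ∀ m n, u m + u n ≤ u (m + n))
    (hrec : ∀ n, u n = c * (n / b) + u (n / b)) (hj : j < b) :
    quotientSumSpan x u ≤
      (quotientSumSpan x u).comap (LinearMap.funLeft R R fun n => b * n + j) := by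
  refine Submodule.span_le.mpr (Set.pair_subset ?_ ?_)
  · exact quotientSum_mul_add_mem_span x hu hrec hj hj
  · exact quotientSum_mul_add_mem_span x hu hrec hj hj.le

end QuotientSum

section Regular

variable {R : Type*} [CommSemiring R] {p : ℕ}

theorem comp_pow_mul_add_mem {W : Submodule R (ℕ → R)}
    (hW : ∀ j < p, W ≤ W.comap (LinearMap.funLeft R R fun n => p * n + j))
    {a : ℕ → R} (ha : a ∈ W) (e : ℕ) {i : ℕ} (hi : i < p ^ e) :
    (fun n => a (p ^ e * n + i)) ∈ W := by
  induction e generalizing a i with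
  | zero => simpa [Nat.lt_one_iff.mp hi] using ha
  | succ e ih =>
    have hp : 0 < p := Nat.pos_of_ne_zero fun h => by simp [h] at hi
    have hdiv : i / p < p ^ e := Nat.div_lt_of_lt_mul (pow_succ' p e ▸ hi)
    have hdigit : ∀ n, p ^ (e + 1) * n + i = p * (p ^ e * n + i / p) + i % p := fun n => by
      conv_lhs => rw [← Nat.div_add_mod i p]
      ring
    simpa only [hdigit, LinearMap.funLeft_apply] using ih (hW _ (Nat.mod_lt i hp) ha) hdiv

end Regular

-- `eval₂` rather than `aeval`: instance search equips `RatFunc ℚ` with a `ℤ`-algebra structure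
-- that does not unify cheaply with the one every ring carries.
theorem eval₂_Tpoly {R : Type*} [CommRing R] (x : R) (p : ℕ) (Cs : ℕ → ℤ) (n : ℕ) :
    (Tpoly p Cs n).eval₂ (Int.castRingHom R) x =
      quotientSum x (fun n => padicValInt p (Corial Cs n)) n (n + 1) := by
  rw [Tpoly, quotientSum, eval₂_finsetSum]
  refine sum_congr rfl fun m _ => ?_
  rw [eval₂_X_pow, nuCnomial, Nat.add_sub_cancel]
  congr 1
  omega

theorem stmt19_general {R : Type*} [CommRing R] [IsNoetherianRing R] (x : R)
    (Cs : ℕ → ℤ) (p : ℕ) (hp : p.Prime) (α : ℕ → ℕ) (s : ℕ)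
    (hC : IsStrongDivSeq Cs) (hid : IdealPrime Cs p α s) (r : ℕ) (hr : r < α 1) :
    (Submodule.span R
      { g : ℕ → R | ∃ e i : ℕ, i < p ^ e ∧
          g = fun n =>
            (Tpoly p Cs (α 1 * (p ^ e * n + i) + r)).eval₂ (Int.castRingHom R) x }).FG := by
  have : Fact p.Prime := ⟨hp⟩
  let W : Submodule R (ℕ → R) := quotientSumSpan x fun n => padicValNat p n !
  have hW_noetherian : IsNoetherian R W := isNoetherian_span_of_finite R (Set.toFinite _)
  have hW_stable : ∀ j < p, W ≤ W.comap (LinearMap.funLeft R R fun n => p * n + j) :=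
    fun j hj => quotientSumSpan_le_comap_funLeft (c := 1) x (padicValNat_factorial_add_le p)
      (fun n => by rw [one_mul]; exact padicValNat_factorial_eq_div_add p n) hj
  have hT_mem : (fun n => (Tpoly p Cs (α 1 * n + r)).eval₂ (Int.castRingHom R) x) ∈ W := by
    simp only [eval₂_Tpoly]
    exact quotientSum_mul_add_mem_span (v := fun n => padicValInt p (Corial Cs n)) (k := r + 1) x
      (padicValNat_factorial_add_le p) (hid.padicValInt_corial hC) hr hr
  refine isNoetherian_submodule.mp hW_noetherian _ (Submodule.span_le.mpr ?_)
  rintro _ ⟨e, i, hi, rfl⟩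
  exact comp_pow_mul_add_mem hW_stable hT_mem e hi

theorem algebraMap_map_intCast_eq_eval₂ {K : Type*} [Field K] (P : ℤ[X]) :
    algebraMap K[X] (RatFunc K) (P.map (Int.castRingHom K)) =
      P.eval₂ (Int.castRingHom _) RatFunc.X := by
  rw [Polynomial.map, hom_eval₂, RatFunc.algebraMap_X,
    RingHom.ext_int (RingHom.comp _ _) (Int.castRingHom _)]

theorem stmt19 (Cs : ℕ → ℤ) (p : ℕ) (hp : p.Prime) (α : ℕ → ℕ) (s : ℕ)
    (hC : IsStrongDivSeq Cs) (hid : IdealPrime Cs p α s)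
    (r : ℕ) (hr : r < α 1) :
    FiniteDimensional (RatFunc ℚ)
      (Submodule.span (RatFunc ℚ)
        { g : ℕ → RatFunc ℚ | ∃ e i : ℕ, i < p ^ e ∧
            g = fun n => algebraMap (Polynomial ℚ) (RatFunc ℚ)
              ((Tpoly p Cs (α 1 * (p ^ e * n + i) + r)).map
                (Int.castRingHom ℚ)) }) := by
  rw [← Submodule.fg_iff_finiteDimensional]
  simpa only [algebraMap_map_intCast_eq_eval₂] using
    stmt19_general RatFunc.X Cs p hp α s hC hid r hr
end
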